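/- Let a, b ∈ F^* with |b| ≤ |a| ≤ 1 and let j be an integer with 0 ≤ j ≤ val(a). Then the set {(x,y) ∈ F² : y ∉ 𝔭^{−j}, bx − ρay ∈ a𝔭^{−j}, bx ∈ 𝔭^{j}, ay ∈ 𝔭^{j}, y(bx+ay) ∈ 𝔭^{j}} equals the set {(x,y) ∈ F² : |ab^{−1}|q^{j} < |x|, |a^{−1}b²x²| ≤ q^{−j}, and y ∈ ρ²a^{−1}bx + 𝔭^{−j}}. -/

import Mathlib

/-!
Put `u = a⁻¹bx`. Since `ρ` is a unit with `ρ³ = 1`, the condition `u − ρy ∈ 𝔭^{-j}` is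
equivalent to `y ∈ ρ²u + 𝔭^{-j}`. Under it, `val y < -j` holds iff `val u < -j`
(`val_add_eq`: adding an element of `𝔭^m` does not change a valuation below `m`), and then
`y` and `u + y ∈ (1 + ρ²)u + 𝔭^{-j} = -ρu + 𝔭^{-j}` both have the valuation of `u`. Hence
`ay(u+y) ∈ 𝔭^j` says exactly `val a + 2 val u ≥ j`; as `val u < 0`, this already forces
`au, ay ∈ 𝔭^j`. The lemma `core` is this argument; what remains is the
translation between absolute values and valuations.
-/

open MeasureTheory
open Classical

noncomputable section

/-- The ambient setting: a nonarchimedean local field `F` whose residue field has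
cardinality `q` and characteristic `p > 3`, containing a primitive cube root of
unity `ρ`, with normalized valuation `val`, uniformizer `ϖ`, an additive character
`ψ` which is trivial on the ring of integers `O` and nontrivial on `𝔭⁻¹`, an
additive Haar measure `μ` normalized by `μ(O) = 1` (so `μ(𝔭^j) = q^{-j}`), and a
multiplicative Haar measure `μs` on `F^*` normalized by `μs(O^*) = 1`. -/
structure CubicSetup (F : Type*) [Field F] [MeasurableSpace F] where
  q : ℕ
  val : F → ℤ
  ϖ : F
  ρ : F
  ψ : F → ℂ
  μ : Measure F
  μs : Measure F
  residue_char : ∃ p f : ℕ, p.Prime ∧ 3 < p ∧ 0 < f ∧ q = p ^ f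
  val_mul : ∀ x y : F, x ≠ 0 → y ≠ 0 → val (x * y) = val x + val y
  val_add : ∀ x y : F, x ≠ 0 → y ≠ 0 → x + y ≠ 0 → min (val x) (val y) ≤ val (x + y)
  uniformizer_ne_zero : ϖ ≠ 0
  val_uniformizer : val ϖ = 1
  val_surjective : ∀ n : ℤ, ∃ x : F, x ≠ 0 ∧ val x = n
  rho_prim_cubic : ρ ^ 2 + ρ + 1 = 0
  psi_add : ∀ x y : F, ψ (x + y) = ψ x * ψ y
  psi_trivial_on_O : ∀ x : F, x ≠ 0 → 0 ≤ val x → ψ x = 1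
  psi_zero : ψ 0 = 1
  psi_nontrivial : ∃ x : F, x ≠ 0 ∧ -1 ≤ val x ∧ ψ x ≠ 1
  mu_add_invariant : ∀ (a : F) (s : Set F), μ ((a + ·) ⁻¹' s) = μ s
  mu_ball : ∀ j : ℤ, μ {x : F | x = 0 ∨ j ≤ val x} = ENNReal.ofReal ((q : ℝ) ^ (-j))
  mus_mul_invariant : ∀ a : F, a ≠ 0 → ∀ s : Set F, μs ((a * ·) ⁻¹' s) = μs s
  mus_units : μs {x : F | x ≠ 0 ∧ val x = 0} = 1
  mus_zero : μs {0} = 0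

namespace CubicSetup

variable {F : Type*} [Field F] [MeasurableSpace F] (S : CubicSetup F)

/-- The normalized absolute value `|x| = q^{-val x}` (with `|0| = 0`). -/
def A (x : F) : ℝ := if x = 0 then 0 else (S.q : ℝ) ^ (-S.val x)

/-- Membership in the ring of integers `O`. -/
def inO (x : F) : Prop := x = 0 ∨ 0 ≤ S.val x

/-- The fractional ideal `𝔭^j = {x : val x ≥ j}`. -/
def pid (j : ℤ) : Set F := {x : F | x = 0 ∨ j ≤ S.val x}

/-- The cubic exponential integral `C(a,b) = ∫_O ψ(ax + bx³) dx`. -/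
def Cint (a b : F) : ℂ := ∫ x in S.pid 0, S.ψ (a * x + b * x ^ 3) ∂S.μ

/-- The cubic exponential integral `C_ℓ(a,b) = ∫_{val x = ℓ} ψ(ax + bx³) dx`. -/
def Cl (ℓ : ℤ) (a b : F) : ℂ :=
  ∫ x in {u : F | u ≠ 0 ∧ S.val u = ℓ}, S.ψ (a * x + b * x ^ 3) ∂S.μ

/-- The cubic exponential integral `C₀(a,b) = ∫_{O^*} ψ(au + bu³) du`. -/
def C0 (a b : F) : ℂ :=
  ∫ u in {x : F | x ≠ 0 ∧ S.val x = 0}, S.ψ (a * u + b * u ^ 3) ∂S.μ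

/-- The Kloosterman integral `K(a,b) = ∫_{O^*} ψ(au + bu⁻¹) du`. -/
def Kl (a b : F) : ℂ :=
  ∫ u in {x : F | x ≠ 0 ∧ S.val x = 0}, S.ψ (a * u + b * u⁻¹) ∂S.μ

/-- `Z` is a complete set of representatives for `𝔭^L` modulo `𝔭^ℓ`. -/
def IsReps (L ℓ : ℤ) (Z : Finset F) : Prop :=
  (∀ z ∈ Z, z ∈ S.pid L) ∧ ∀ x ∈ S.pid L, ∃! z, z ∈ Z ∧ x - z ∈ S.pid ℓ

/-- `R` is a complete set of representatives of `O^*` for the units of the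
residue field `(O/𝔭)^*`. -/
def IsUnitReps (R : Finset F) : Prop :=
  (∀ r ∈ R, r ≠ 0 ∧ S.val r = 0) ∧
    ∀ x : F, x ≠ 0 → S.val x = 0 → ∃! r, r ∈ R ∧ x - r ∈ S.pid 1

/-- The big cell orbital integral `I(a,b)`: the integral over `(x,y,z,s) ∈ F⁴`,
`t ∈ F^*` of the characteristic function of `O^8` evaluated at
`(0, t, t⁻¹a, t(x+as), t⁻¹b, t(bs−y), t⁻¹(xb+yρ²a), t[(xb+yρ²a)s−(xy+zρ)])`,
times `|t|² ψ[x + y + 2a(xy−z)yρ² − 2bxzρ]`, w.r.t. `d*t ds dx dy dz`. -/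
def Iab (a b : F) : ℂ :=
  ∫ z, (∫ y, (∫ x, (∫ s, (∫ t,
    (if S.inO (0 : F) ∧ S.inO t ∧ S.inO (t⁻¹ * a) ∧ S.inO (t * (x + a * s)) ∧
        S.inO (t⁻¹ * b) ∧ S.inO (t * (b * s - y)) ∧
        S.inO (t⁻¹ * (x * b + y * S.ρ ^ 2 * a)) ∧
        S.inO (t * ((x * b + y * S.ρ ^ 2 * a) * s - (x * y + z * S.ρ)))
      then ((S.A t : ℂ) ^ 2) *
          S.ψ (x + y + 2 * a * (x * y - z) * y * S.ρ ^ 2 - 2 * b * x * z * S.ρ)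
      else 0) ∂S.μs) ∂S.μ) ∂S.μ) ∂S.μ) ∂S.μ

/-- The integral `I(j; a, b)`. -/
def Ij (j : ℤ) (a b : F) : ℂ :=
  (S.q : ℂ) ^ (-(2 * j)) *
    ∫ z, (∫ y, (∫ x, (∫ s,
      (if x + a * s ∈ S.pid (-j) ∧ y - b * s ∈ S.pid (-j) ∧
          (x * b + y * S.ρ ^ 2 * a) * s - (x * y + z * S.ρ) ∈ S.pid (-j) ∧
          x * b + y * S.ρ ^ 2 * a ∈ S.pid j
        then S.ψ (x + y + 2 * a * S.ρ ^ 2 * x * y ^ 2 -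
            (2 * S.ρ * b * x + 2 * S.ρ ^ 2 * a * y) * z)
        else 0) ∂S.μ) ∂S.μ) ∂S.μ) ∂S.μ

/-- The domain `D_j(a,b) = {(x,y) : bx − ρay ∈ a𝔭^{-j}, bx ∈ 𝔭^j, ay ∈ 𝔭^j,
y(bx+ay) ∈ 𝔭^j}`. -/
def Dset (j : ℤ) (a b : F) : Set (F × F) :=
  {p : F × F | a⁻¹ * (b * p.1 - S.ρ * a * p.2) ∈ S.pid (-j) ∧ b * p.1 ∈ S.pid j ∧
    a * p.2 ∈ S.pid j ∧ p.2 * (b * p.1 + a * p.2) ∈ S.pid j}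

/-- The common integrand `ψ[(1 − ρa⁻¹b)x − (1+2ρ)y + 2a⁻¹b²x³]`. -/
def integrand (a b x y : F) : ℂ :=
  S.ψ ((1 - S.ρ * a⁻¹ * b) * x - (1 + 2 * S.ρ) * y + 2 * a⁻¹ * b ^ 2 * x ^ 3)

/-- `I₁^{(j)}(a,b)`: the part of the integral with `y ∈ 𝔭^{-m}`, where
`m = min(j, val(a)−j, ⌊(val(a)−j)/2⌋)`. -/
def I1j (j : ℤ) (a b : F) : ℂ :=
  ((S.A a : ℂ))⁻¹ * ∫ y, (∫ x,
    (if (x, y) ∈ S.Dset j a b ∧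
        y ∈ S.pid (-(min j (min (S.val a - j) ((S.val a - j) / 2))))
      then S.integrand a b x y else 0) ∂S.μ) ∂S.μ

/-- `I₂^{(j)}(a,b)`: the part of the integral with `y ∉ 𝔭^{-j}`. -/
def I2j (j : ℤ) (a b : F) : ℂ :=
  ((S.A a : ℂ))⁻¹ * ∫ y, (∫ x,
    (if (x, y) ∈ S.Dset j a b ∧ y ∉ S.pid (-j)
      then S.integrand a b x y else 0) ∂S.μ) ∂S.μ

/-- `I₃^{(j)}(a,b)`: the part of the integral with `y ∈ 𝔭^{-j}` and `ay² ∉ 𝔭^j`. -/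
def I3j (j : ℤ) (a b : F) : ℂ :=
  ((S.A a : ℂ))⁻¹ * ∫ y, (∫ x,
    (if (x, y) ∈ S.Dset j a b ∧ y ∈ S.pid (-j) ∧ a * y ^ 2 ∉ S.pid j
      then S.integrand a b x y else 0) ∂S.μ) ∂S.μ

/-- `G_j^ℓ(a,b) = ∫∫_{Γ_j} ψ(ϖ^ℓ b⁻¹ x − 27⁻¹ ϖ^{3ℓ} a⁻¹b⁻¹ x³ + ϖ^ℓ a⁻¹ y) dx dy`. -/
def Gint (j ℓ : ℤ) (a b : F) : ℂ :=
  ∫ y, (∫ x,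
    (if S.inO x ∧ S.inO y ∧ a⁻¹ * (x ^ 3 - y ^ 3) ∈ S.pid (-j)
      then S.ψ (S.ϖ ^ ℓ * b⁻¹ * x - (27 : F)⁻¹ * S.ϖ ^ (3 * ℓ) * a⁻¹ * b⁻¹ * x ^ 3 +
          S.ϖ ^ ℓ * a⁻¹ * y)
      else 0) ∂S.μ) ∂S.μ

/-- `Γ_j = {(x,y) ∈ O × O : x³ − y³ ∈ a𝔭^{-j}}`. -/
def Gamma (a : F) (j : ℤ) : Set (F × F) :=
  {p : F × F | S.inO p.1 ∧ S.inO p.2 ∧ a⁻¹ * (p.1 ^ 3 - p.2 ^ 3) ∈ S.pid (-j)}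

/-- `𝔭^{⌈m/3⌉} × 𝔭^{⌈m/3⌉}`. -/
def Ball (m : ℤ) : Set (F × F) := S.pid (-((-m) / 3)) ×ˢ S.pid (-((-m) / 3))

/-- `{(x,y) : |x| = q^{-n}, y ∈ ρ^k x + 𝔭^{m−2n}}`. -/
def Ann (m n : ℤ) (k : ℕ) : Set (F × F) :=
  {p : F × F | p.1 ≠ 0 ∧ S.val p.1 = n ∧ p.2 - S.ρ ^ k * p.1 ∈ S.pid (m - 2 * n)}

/-- The degenerate orbital integral `I₁(a)`, integrated w.r.t. `dx dy dz d*t`. -/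
def Ione (a : F) : ℂ :=
  ∫ t, (∫ z, (∫ y, (∫ x,
    (if S.inO t ∧ S.inO (t * (a + x)) ∧ S.inO (a ^ (-2 : ℤ) * t⁻¹) ∧ S.inO (t * y) ∧
        S.inO (a ^ (-2 : ℤ) * t⁻¹ * x) ∧
        S.inO (t * (S.ρ * a * y - S.ρ ^ 2 * x * y - z))
      then ((S.A t : ℂ) ^ 2) *
          S.ψ (-(S.ρ * a⁻¹ * x * y) - S.ρ ^ 2 * a⁻¹ * z + a ^ (-2 : ℤ) * x * z + x + y)
      else 0) ∂S.μ) ∂S.μ) ∂S.μ) ∂S.μs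

/-- The degenerate orbital integral `I₂(a)`, integrated w.r.t. `dx dy dz d*t`. -/
def Itwo (a : F) : ℂ :=
  ∫ t, (∫ z, (∫ y, (∫ x,
    (if S.inO t ∧ S.inO (a ^ (-2 : ℤ) * t⁻¹) ∧ S.inO (t * x) ∧ S.inO (t * (a - y)) ∧
        S.inO (a ^ (-2 : ℤ) * t⁻¹ * y) ∧ S.inO (t * (x * a - x * y - z * S.ρ))
      then ((S.A t : ℂ) ^ 2) *
          S.ψ (a ^ (-2 : ℤ) * (x * y - z) * y - S.ρ * (x * y * S.ρ ^ 2 + z) * a⁻¹ + x + y)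
      else 0) ∂S.μ) ∂S.μ) ∂S.μ) ∂S.μs

theorem val_one : S.val 1 = 0 := by
  have h := S.val_mul 1 1 one_ne_zero one_ne_zero
  rw [mul_one] at h
  omega

theorem val_neg (x : F) : S.val (-x) = S.val x := by
  by_cases hx : x = 0
  · simp [hx]
  have h1 : (-1 : F) ≠ 0 := neg_ne_zero.mpr one_ne_zero
  have h := S.val_mul (-1) (-1) h1 h1
  rw [neg_one_mul, neg_neg, S.val_one] at h
  have h' := S.val_mul (-1) x h1 hx
  rw [neg_one_mul] at h'
  omega

theorem val_inv {x : F} (hx : x ≠ 0) : S.val x⁻¹ = -S.val x := by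
  have h := S.val_mul x x⁻¹ hx (inv_ne_zero hx)
  rw [mul_inv_cancel₀ hx, S.val_one] at h
  omega

theorem rho_cube : S.ρ ^ 3 = 1 := by
  linear_combination (S.ρ - 1) * S.rho_prim_cubic

theorem rho_ne_zero : S.ρ ≠ 0 := by
  intro h
  have h' := S.rho_cube
  simp [h] at h'

theorem val_rho : S.val S.ρ = 0 := by
  have h0 := S.rho_ne_zero
  have h1 := S.val_mul S.ρ S.ρ h0 h0
  have h2 := S.val_mul S.ρ (S.ρ * S.ρ) h0 (mul_ne_zero h0 h0)
  rw [show S.ρ * (S.ρ * S.ρ) = 1 by rw [← S.rho_cube]; ring, S.val_one] at h2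
  omega

theorem notMem_pid {x : F} {m : ℤ} : x ∉ S.pid m ↔ x ≠ 0 ∧ S.val x < m := by
  simp [pid]

theorem mem_pid {x : F} {m : ℤ} (hx : x ≠ 0) : x ∈ S.pid m ↔ m ≤ S.val x := by
  simp [pid, hx]

theorem neg_mem_pid {x : F} {m : ℤ} : -x ∈ S.pid m ↔ x ∈ S.pid m := by
  simp [pid, S.val_neg]

/-- Multiplication by `c ≠ 0` scales `𝔭^m` to `𝔭^{m + val c}`. -/
theorem mul_mem_pid {c x : F} {m : ℤ} (hc : c ≠ 0) :
    c * x ∈ S.pid m ↔ x ∈ S.pid (m - S.val c) := by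
  by_cases hx : x = 0
  · simp [pid, hx]
  rw [S.mem_pid (mul_ne_zero hc hx), S.mem_pid hx, S.val_mul c x hc hx]
  omega

/-- Adding an element of `𝔭^m` preserves nonvanishing and every valuation below `m`. -/
theorem val_add_eq {x e : F} {m : ℤ} (hx : x ≠ 0) (hv : S.val x < m) (he : e ∈ S.pid m) :
    x + e ≠ 0 ∧ S.val (x + e) = S.val x := by
  by_cases he0 : e = 0
  · simp [he0, hx]
  rw [S.mem_pid he0] at he
  have hne : x + e ≠ 0 := by
    intro h
    have h' : x = -e := eq_neg_of_add_eq_zero_left h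
    rw [h', S.val_neg] at hv
    omega
  refine ⟨hne, ?_⟩
  have h1 := S.val_add x e hx he0 hne
  have h2 := S.val_add (x + e) (-e) hne (neg_ne_zero.mpr he0) (by simpa using hx)
  rw [S.val_neg, add_neg_cancel_right] at h2
  omega

theorem rho_mul_mem_pid {x : F} {m : ℤ} : S.ρ * x ∈ S.pid m ↔ x ∈ S.pid m := by
  rw [S.mul_mem_pid S.rho_ne_zero, S.val_rho, sub_zero]

/-- If `y ∈ ρ²u + 𝔭^m` and `val u < m`, then `y` and `u + y` have the valuation of `u`. -/
theorem val_of_near {u y : F} {m : ℤ} (hu : u ≠ 0) (hv : S.val u < m)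
    (h : y - S.ρ ^ 2 * u ∈ S.pid m) :
    (y ≠ 0 ∧ S.val y = S.val u) ∧ (u + y ≠ 0 ∧ S.val (u + y) = S.val u) := by
  have hr := S.rho_ne_zero
  have h1 : S.val (S.ρ * u) = S.val u := by rw [S.val_mul _ _ hr hu, S.val_rho, zero_add]
  have hru := mul_ne_zero hr hu
  have h2 : S.val (S.ρ * (S.ρ * u)) = S.val u := by
    rw [S.val_mul _ _ hr hru, S.val_rho, zero_add, h1]
  constructor
  · have := S.val_add_eq (mul_ne_zero hr hru) (by rw [h2]; exact hv) h
    rwa [h2, show S.ρ * (S.ρ * u) + (y - S.ρ ^ 2 * u) = y by ring] at this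
  · have := S.val_add_eq (neg_ne_zero.mpr hru) (by rw [S.val_neg, h1]; exact hv) h
    rwa [S.val_neg, h1, show -(S.ρ * u) + (y - S.ρ ^ 2 * u) = u + y by
      linear_combination (-u) * S.rho_prim_cubic] at this

/-- The set equality in terms of `u = a⁻¹bx`, with valuations in place of absolute values. -/
theorem core {a u y : F} (ha : a ≠ 0) {j : ℤ} (hj0 : 0 ≤ j) :
    (y ∉ S.pid (-j) ∧ u - S.ρ * y ∈ S.pid (-j) ∧ a * u ∈ S.pid j ∧ a * y ∈ S.pid j ∧
      y * (a * (u + y)) ∈ S.pid j) ↔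
    (u ≠ 0 ∧ S.val u < -j ∧ j ≤ S.val a + 2 * S.val u ∧ y - S.ρ ^ 2 * u ∈ S.pid (-j)) := by
  have key : u - S.ρ * y ∈ S.pid (-j) ↔ y - S.ρ ^ 2 * u ∈ S.pid (-j) := by
    rw [← S.neg_mem_pid (x := u - S.ρ * y), ← S.rho_mul_mem_pid (x := y - S.ρ ^ 2 * u),
      show S.ρ * (y - S.ρ ^ 2 * u) = -(u - S.ρ * y) by linear_combination (-u) * S.rho_cube]
  rw [key]
  constructor
  · rintro ⟨hy, h, -, -, h5⟩
    obtain ⟨hy0, hyv⟩ := S.notMem_pid.mp hy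
    have hu : u ∉ S.pid (-j) := by
      intro hu
      have hry := mul_ne_zero S.rho_ne_zero hy0
      have hv : S.val (S.ρ * y) = S.val y := by
        rw [S.val_mul _ _ S.rho_ne_zero hy0, S.val_rho, zero_add]
      obtain ⟨h1, h2⟩ := S.val_add_eq hry (by omega) (key.mpr h)
      rw [show S.ρ * y + (u - S.ρ * y) = u by ring] at h1 h2
      rw [S.mem_pid h1] at hu
      omega
    obtain ⟨hu0, huv⟩ := S.notMem_pid.mp hu
    obtain ⟨⟨-, h1⟩, h2, h3⟩ := S.val_of_near hu0 huv h
    rw [S.mem_pid (mul_ne_zero hy0 (mul_ne_zero ha h2)),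
      S.val_mul _ _ hy0 (mul_ne_zero ha h2), S.val_mul _ _ ha h2] at h5
    exact ⟨hu0, huv, by omega, h⟩
  · rintro ⟨hu0, huv, hau, h⟩
    obtain ⟨⟨hy0, h1⟩, h2, h3⟩ := S.val_of_near hu0 huv h
    refine ⟨S.notMem_pid.mpr ⟨hy0, by omega⟩, h, ?_, ?_, ?_⟩
    · rw [S.mem_pid (mul_ne_zero ha hu0), S.val_mul _ _ ha hu0]
      omega
    · rw [S.mem_pid (mul_ne_zero ha hy0), S.val_mul _ _ ha hy0]
      omega
    · rw [S.mem_pid (mul_ne_zero hy0 (mul_ne_zero ha h2)),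
        S.val_mul _ _ hy0 (mul_ne_zero ha h2), S.val_mul _ _ ha h2]
      omega

theorem one_lt_q : (1 : ℝ) < S.q := by
  obtain ⟨p, f, -, hp3, hf, hq⟩ := S.residue_char
  rw [hq]
  exact_mod_cast Nat.one_lt_pow hf.ne' (by omega)

/-- Description of the domain of `I₂^{(j)}`. -/
theorem statement8 (a b : F) (ha : a ≠ 0) (hb : b ≠ 0)
    (h1 : S.A b ≤ S.A a) (h2 : S.A a ≤ 1) (j : ℤ) (hj0 : 0 ≤ j) (hj : j ≤ S.val a) :
    {p : F × F | p.2 ∉ S.pid (-j) ∧ a⁻¹ * (b * p.1 - S.ρ * a * p.2) ∈ S.pid (-j) ∧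
        b * p.1 ∈ S.pid j ∧ a * p.2 ∈ S.pid j ∧
        p.2 * (b * p.1 + a * p.2) ∈ S.pid j} =
      {p : F × F | S.A (a * b⁻¹) * (S.q : ℝ) ^ j < S.A p.1 ∧
        S.A (a⁻¹ * b ^ 2 * p.1 ^ 2) ≤ (S.q : ℝ) ^ (-j) ∧
        p.2 - S.ρ ^ 2 * a⁻¹ * b * p.1 ∈ S.pid (-j)} := by
  ext ⟨x, y⟩
  simp only [Set.mem_ofPred_eq]
  have hq := S.one_lt_q
  have hq0 : (0 : ℝ) < S.q := one_pos.trans hq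
  have e1 : a⁻¹ * (b * x - S.ρ * a * y) = a⁻¹ * b * x - S.ρ * y := by field_simp
  have e2 : b * x = a * (a⁻¹ * b * x) := by field_simp
  have e3 : b * x + a * y = a * (a⁻¹ * b * x + y) := by field_simp
  rw [e1, e3, e2, S.core ha hj0, mul_assoc (S.ρ ^ 2), mul_assoc (S.ρ ^ 2)]
  by_cases hx : x = 0
  -- Both sides fail at `x = 0`: the left needs `u ≠ 0`, the right a positive `|x|`.
  · have : 0 ≤ S.A (a * b⁻¹) * (S.q : ℝ) ^ j := by
      unfold A
      split_ifs <;> positivity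
    simp [hx, A] at this ⊢
    intro h
    exact absurd h (not_lt.mpr this)
  have hai := inv_ne_zero ha
  have hu : a⁻¹ * b * x ≠ 0 := mul_ne_zero (mul_ne_zero hai hb) hx
  have hv : S.val (a⁻¹ * b * x) = -S.val a + S.val b + S.val x := by
    rw [S.val_mul _ _ (mul_ne_zero hai hb) hx, S.val_mul _ _ hai hb, S.val_inv ha]
  have hab : a * b⁻¹ ≠ 0 := mul_ne_zero ha (inv_ne_zero hb)
  have hs : a⁻¹ * b ^ 2 * x ^ 2 ≠ 0 :=
    mul_ne_zero (mul_ne_zero hai (pow_ne_zero 2 hb)) (pow_ne_zero 2 hx)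
  have hsv : S.val (a⁻¹ * b ^ 2 * x ^ 2) = S.val a + 2 * S.val (a⁻¹ * b * x) := by
    rw [show a⁻¹ * b ^ 2 * x ^ 2 = a * ((a⁻¹ * b * x) * (a⁻¹ * b * x)) by field_simp,
      S.val_mul _ _ ha (mul_ne_zero hu hu), S.val_mul _ _ hu hu]
    ring
  have c1 : S.A (a * b⁻¹) * (S.q : ℝ) ^ j < S.A x ↔ S.val (a⁻¹ * b * x) < -j := by
    rw [A, A, if_neg hab, if_neg hx, ← zpow_add₀ hq0.ne', zpow_lt_zpow_iff_right₀ hq,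
      S.val_mul _ _ ha (inv_ne_zero hb), S.val_inv hb, hv]
    omega
  have c2 : S.A (a⁻¹ * b ^ 2 * x ^ 2) ≤ (S.q : ℝ) ^ (-j) ↔
      j ≤ S.val a + 2 * S.val (a⁻¹ * b * x) := by
    rw [A, if_neg hs, zpow_le_zpow_iff_right₀ hq, hsv]
    omega
  rw [c1, c2]
  simp only [ne_eq, hu, not_false_eq_true, true_and]

end CubicSetup
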